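/- Let A be a finite (0,1)-matrix. Then A is nested if and only if A contains no 0-gem as a subconfiguration. (Equivalently: if every two rows of A are disjoint or nested, then there exists a permutation of the columns of A after which the 1's in every row appear consecutively, and conversely a nested matrix has no two rows that overlap.) -/

import Mathlib

/-- A (0,1)-matrix (with Boolean entries) has the consecutive-ones property for the rows
if there is a permutation of its columns after which the 1's in each row appear
consecutively. -/
def HasC1P {m n : ℕ} (A : Fin m → Fin n → Bool) : Prop :=
  ∃ σ : Equiv.Perm (Fin n), ∀ (i : Fin m) (j₁ j₂ j₃ : Fin n),
    j₁ ≤ j₂ → j₂ ≤ j₃ → A i (σ j₁) = true → A i (σ j₃) = true → A i (σ j₂) = true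

/-- A (0,1)-matrix is nested if it has a consecutive-ones ordering for the rows and
every two rows are disjoint or nested. -/
def IsNestedMatrix {m n : ℕ} (A : Fin m → Fin n → Bool) : Prop :=
  HasC1P A ∧ ∀ i₁ i₂ : Fin m,
    (∀ j : Fin n, ¬(A i₁ j = true ∧ A i₂ j = true)) ∨
    (∀ j : Fin n, A i₁ j = true → A i₂ j = true) ∨
    (∀ j : Fin n, A i₂ j = true → A i₁ j = true)

/-- `A` contains the 0-gem (the 2×3 matrix with rows (1,1,0) and (0,1,1)) as a
subconfiguration: some permutation of the rows and columns of the 0-gem is a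
submatrix of `A`. -/
def ContainsZeroGem {m n : ℕ} (A : Fin m → Fin n → Bool) : Prop :=
  ∃ (i₁ i₂ : Fin m) (j₁ j₂ j₃ : Fin n),
    i₁ ≠ i₂ ∧ j₁ ≠ j₂ ∧ j₁ ≠ j₃ ∧ j₂ ≠ j₃ ∧
    A i₁ j₁ = true ∧ A i₁ j₂ = true ∧ A i₁ j₃ = false ∧
    A i₂ j₁ = false ∧ A i₂ j₂ = true ∧ A i₂ j₃ = true

/-!
Rows that are pairwise disjoint or nested are made consecutive by one linear order on the columns.
For columns `x` and `y`, the branch at `x` away from `y` is the union of `{x}` and all rows that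
contain `x` but not `y`. Fix an arbitrary linear order on the *sets* of columns, and put `x` before
`y` when the branch at `x` away from `y` comes before the branch at `y` away from `x`. If a row
contains `x` and `y` but not `z`, then `x` and `y` have the same branch away from `z`, and `z` has
the same branch away from `x` as away from `y`. So `z` lies on the same side of `x` and of `y`,
which yields both transitivity and consecutiveness of the rows.
-/

section SetFamily

variable {ι α : Type*}

/-- Two sets overlap if they are neither disjoint nor nested; the empty set overlaps no set. -/
def Overlap (s t : Set α) : Prop :=
  ¬ Disjoint s t ∧ ¬ s ⊆ t ∧ ¬ t ⊆ s

/-- A family of sets is laminar if every two of its members are disjoint or nested. -/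
def IsLaminar (S : ι → Set α) : Prop :=
  ∀ i k, Disjoint (S i) (S k) ∨ S i ⊆ S k ∨ S k ⊆ S i

/-- The consecutive-ones property of a family of sets, for a ground set of any size: a linear order
on the ground set replaces the permutation of the columns. -/
def HasConsecutiveOrder (S : ι → Set α) : Prop :=
  ∃ _ : LinearOrder α, ∀ i, (S i).OrdConnected

theorem isLaminar_iff_forall_not_overlap {S : ι → Set α} :
    IsLaminar S ↔ ∀ i k, ¬ Overlap (S i) (S k) := by
  simp only [IsLaminar, Overlap, not_and_or, not_not]

/-- The branch at `x` away from `y`: the point `x` together with all members of the family that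
contain `x` but not `y`. Comparing branches decides the order of `x` and `y`. -/
def branch (S : ι → Set α) (x y : α) : Set α :=
  insert x {w | ∃ i, x ∈ S i ∧ y ∉ S i ∧ w ∈ S i}

theorem branch_ne_branch (S : ι → Set α) {x y : α} (hxy : x ≠ y) :
    branch S x y ≠ branch S y x := by
  have mem : x ∈ branch S x y := Set.mem_insert x _
  have notMem : x ∉ branch S y x := by
    rintro (rfl | ⟨i, -, hx, hx'⟩)
    exacts [hxy rfl, hx hx']
  exact fun h => notMem (h ▸ mem)

theorem branch_away_congr {S : ι → Set α} {x y z : α} (h : ∀ i, x ∈ S i → (y ∈ S i ↔ z ∈ S i)) :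
    branch S x y = branch S x z := by
  unfold branch
  grind

namespace IsLaminar

variable {S : ι → Set α} {i : ι} {x y z : α}

theorem branch_base_eq (hS : IsLaminar S) (hx : x ∈ S i) (hy : y ∈ S i) (hz : z ∉ S i) :
    branch S x z = branch S y z := by
  suffices subset : ∀ {a b}, a ∈ S i → b ∈ S i → branch S a z ⊆ branch S b z from
    (subset hx hy).antisymm (subset hy hx)
  rintro a b ha hb w (rfl | ⟨k, hak, hzk, hwk⟩)
  · exact Or.inr ⟨i, hb, hz, ha⟩
  · rcases hS i k with disjoint | i_sub_k | k_sub_i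
    · exact (Set.disjoint_left.1 disjoint ha hak).elim
    · exact Or.inr ⟨k, i_sub_k hb, hzk, hwk⟩
    · exact Or.inr ⟨i, hb, hz, k_sub_i hwk⟩

theorem mem_iff_mem_of_mem (hS : IsLaminar S) (hx : x ∈ S i) (hy : y ∈ S i) (hz : z ∉ S i)
    {k : ι} (hzk : z ∈ S k) : x ∈ S k ↔ y ∈ S k := by
  rcases hS i k with disjoint | i_sub_k | k_sub_i
  · exact iff_of_false (Set.disjoint_left.1 disjoint hx) (Set.disjoint_left.1 disjoint hy)
  · exact iff_of_true (i_sub_k hx) (i_sub_k hy)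
  · exact (hz (k_sub_i hzk)).elim

theorem branch_away_eq (hS : IsLaminar S) (hx : x ∈ S i) (hy : y ∈ S i) (hz : z ∉ S i) :
    branch S z x = branch S z y :=
  branch_away_congr fun _ hzk => hS.mem_iff_mem_of_mem hx hy hz hzk

end IsLaminar

/-- The strict order on the ground set that compares opposite branches in a fixed but arbitrary
linear order on sets, here a linear extension of inclusion. -/
def BranchLT (S : ι → Set α) (x y : α) : Prop :=
  toLinearExtension (branch S x y) < toLinearExtension (branch S y x)

namespace BranchLT

variable {S : ι → Set α} {i : ι} {x y z : α}

theorem asymm (h : BranchLT S x y) : ¬ BranchLT S y x :=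
  lt_asymm h

theorem trichotomous (S : ι → Set α) (x y : α) : BranchLT S x y ∨ x = y ∨ BranchLT S y x := by
  rcases eq_or_ne x y with rfl | hxy
  · exact Or.inr (Or.inl rfl)
  · have keys_ne : toLinearExtension (branch S x y) ≠ toLinearExtension (branch S y x) :=
      branch_ne_branch S hxy
    rcases lt_or_gt_of_ne keys_ne with h | h
    exacts [Or.inl h, Or.inr (Or.inr h)]

theorem congr_left (hS : IsLaminar S) (hx : x ∈ S i) (hy : y ∈ S i) (hz : z ∉ S i) :
    BranchLT S x z ↔ BranchLT S y z := by
  rw [BranchLT, BranchLT, hS.branch_base_eq hx hy hz, hS.branch_away_eq hx hy hz]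

theorem congr_right (hS : IsLaminar S) (hx : x ∈ S i) (hy : y ∈ S i) (hz : z ∉ S i) :
    BranchLT S z x ↔ BranchLT S z y := by
  rw [BranchLT, BranchLT, hS.branch_base_eq hx hy hz, hS.branch_away_eq hx hy hz]

theorem trans (hS : IsLaminar S) (hxy : BranchLT S x y) (hyz : BranchLT S y z) :
    BranchLT S x z := by
  by_cases h_xy : ∃ i, x ∈ S i ∧ y ∈ S i ∧ z ∉ S i
  · obtain ⟨i, hx, hy, hz⟩ := h_xy
    exact (congr_left hS hx hy hz).2 hyz
  by_cases h_yz : ∃ i, y ∈ S i ∧ z ∈ S i ∧ x ∉ S i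
  · obtain ⟨i, hy, hz, hx⟩ := h_yz
    exact (congr_right hS hy hz hx).1 hxy
  by_cases h_xz : ∃ i, x ∈ S i ∧ z ∈ S i ∧ y ∉ S i
  · obtain ⟨i, hx, hz, hy⟩ := h_xz
    exact (hyz.asymm ((congr_left hS hx hz hy).1 hxy)).elim
  -- No member separates one of the points from the other two, so each point has a single branch.
  have branch_x : branch S x y = branch S x z := branch_away_congr (by grind)
  have branch_y : branch S y x = branch S y z := branch_away_congr (by grind)
  have branch_z : branch S z x = branch S z y := branch_away_congr (by grind)
  unfold BranchLT at *
  rw [branch_x, branch_y] at hxy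
  rw [branch_z]
  exact hxy.trans hyz

theorem isStrictTotalOrder (hS : IsLaminar S) : IsStrictTotalOrder α (BranchLT S) where
  trichotomous x y hxy hyx := ((trichotomous S x y).resolve_left hxy).resolve_right hyx
  irrefl _ := lt_irrefl _
  trans _ _ _ := trans hS

end BranchLT

open Classical in
theorem IsLaminar.hasConsecutiveOrder {S : ι → Set α} (hS : IsLaminar S) :
    HasConsecutiveOrder S := by
  have isStrictTotalOrder := BranchLT.isStrictTotalOrder hS
  let order : LinearOrder α := linearOrderOfSTO (BranchLT S)
  refine ⟨order, fun i => ⟨fun x hx z hz y ⟨hxy, hyz⟩ => ?_⟩⟩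
  by_contra hy
  have x_lt_y : BranchLT S x y := hxy.lt_of_ne (by rintro rfl; exact hy hx)
  have y_lt_z : BranchLT S y z := hyz.lt_of_ne (by rintro rfl; exact hy hz)
  exact y_lt_z.asymm ((BranchLT.congr_left hS hx hz hy).1 x_lt_y)

theorem nested_iff_no_zero_gem_general (S : ι → Set α) :
    HasConsecutiveOrder S ∧ IsLaminar S ↔ ¬ ∃ i k, Overlap (S i) (S k) := by
  simp only [not_exists, ← isLaminar_iff_forall_not_overlap, and_iff_right_iff_imp]
  exact IsLaminar.hasConsecutiveOrder

theorem hasConsecutiveOrder_iff_exists_equiv_fin [Fintype α] {n : ℕ} (hn : Fintype.card α = n)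
    (S : ι → Set α) :
    HasConsecutiveOrder S ↔ ∃ σ : Fin n ≃ α, ∀ i, (σ ⁻¹' S i).OrdConnected := by
  constructor
  · rintro ⟨_, hS⟩
    let σ : Fin n ≃o α := Fintype.orderIsoFinOfCardEq α hn
    exact ⟨σ.toEquiv, fun i => (hS i).preimage_mono σ.monotone⟩
  · rintro ⟨σ, hσ⟩
    let order : LinearOrder α := LinearOrder.lift' σ.symm σ.symm.injective
    refine ⟨order, fun i => ?_⟩
    have preimage_symm : σ.symm ⁻¹' (σ ⁻¹' S i) = S i := σ.symm_preimage_preimage (S i)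
    exact preimage_symm ▸ (hσ i).preimage_mono fun _ _ h => h

/-- The set of columns in which row `i` has a `1`. -/
def rowSupport (A : ι → α → Bool) (i : ι) : Set α :=
  {j | A i j = true}

end SetFamily

section BooleanMatrix

variable {m n : ℕ} (A : Fin m → Fin n → Bool)

theorem hasC1P_iff_hasConsecutiveOrder : HasC1P A ↔ HasConsecutiveOrder (rowSupport A) := by
  rw [hasConsecutiveOrder_iff_exists_equiv_fin (Fintype.card_fin n)]
  refine exists_congr fun σ => forall_congr' fun i => ?_
  exact ⟨fun h => ⟨fun j₁ h₁ j₃ h₃ j₂ h₂ => h j₁ j₂ j₃ h₂.1 h₂.2 h₁ h₃⟩,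
    fun h j₁ j₂ j₃ h₁₂ h₂₃ h₁ h₃ => h.out h₁ h₃ ⟨h₁₂, h₂₃⟩⟩

theorem isNestedMatrix_iff_rowSupport :
    IsNestedMatrix A ↔ HasConsecutiveOrder (rowSupport A) ∧ IsLaminar (rowSupport A) := by
  simp only [IsNestedMatrix, hasC1P_iff_hasConsecutiveOrder, IsLaminar, rowSupport,
    Set.disjoint_left, Set.subset_def, Set.mem_ofPred_eq, not_and]

theorem containsZeroGem_iff_exists_overlap :
    ContainsZeroGem A ↔ ∃ i k, Overlap (rowSupport A i) (rowSupport A k) := by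
  simp only [ContainsZeroGem, Overlap, rowSupport, Set.not_disjoint_iff, Set.not_subset,
    Set.mem_ofPred_eq, Bool.not_eq_true]
  constructor
  · rintro ⟨i, k, j₁, j₂, j₃, -, -, -, -, hi₁, hi₂, hi₃, hk₁, hk₂, hk₃⟩
    exact ⟨i, k, ⟨j₂, hi₂, hk₂⟩, ⟨j₁, hi₁, hk₁⟩, ⟨j₃, hk₃, hi₃⟩⟩
  · rintro ⟨i, k, ⟨j₂, hi₂, hk₂⟩, ⟨j₁, hi₁, hk₁⟩, ⟨j₃, hk₃, hi₃⟩⟩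
    exact ⟨i, k, j₁, j₂, j₃, by grind⟩

end BooleanMatrix

/-- A (0,1)-matrix is nested if and only if it contains no 0-gem as a subconfiguration. -/
theorem nested_iff_no_zero_gem {m n : ℕ} (A : Fin m → Fin n → Bool) :
    IsNestedMatrix A ↔ ¬ ContainsZeroGem A := by
  rw [isNestedMatrix_iff_rowSupport, containsZeroGem_iff_exists_overlap]
  exact nested_iff_no_zero_gem_general (rowSupport A)
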